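/- Let σ ∈ PGL₂(ℚ) be the involution σ(z) = z/(2z − 1). Then for every algebraic number α with α ∉ {0, 1}, h(α) + h(α/(2α − 1)) ≥ (1/2)·log 3, with equality for α = (1 + i√3)/2. -/

import Mathlib

/- For a nonzero `f ∈ ℤ[X]`, the Mahler measure `M(f) = |a_n| ∏ max(|α_i|,1)`. -/
open Polynomial

noncomputable def mahlerMeasure (f : ℤ[X]) : ℝ :=
  |(f.leadingCoeff : ℝ)| *
    (((f.map (Int.castRingHom ℂ)).roots).map (fun z => max ‖z‖ 1)).prod

/-- The primitive minimal polynomial over `ℤ` of an algebraic number. -/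
noncomputable def intMinpoly (α : ℂ) : ℤ[X] :=
  (IsLocalization.integerNormalization (nonZeroDivisors ℤ) (minpoly ℚ α)).primPart

/-- The absolute logarithmic Weil height `h(α) = (1/n) log M(f)`. -/
noncomputable def height (α : ℂ) : ℝ :=
  Real.log (mahlerMeasure (intMinpoly α)) / (minpoly ℚ α).natDegree

/-!
Write `f` and `g` for the primitive minimal polynomials of `α` and of its image under the
involution, both of degree `n`. The involution is given by a matrix in `GL₂(ℤ)`, and such matrices
act on integral binary forms of degree `n` preserving primitivity. Hence `g` is, up to sign, the
transform of `f`, and `M(f) * M(g)` is the square of the leading coefficient of `f` times the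
product of `max |z| 1 * max |z| |2z - 1|` over the roots `z` of `f`. The sixth power of each such
factor is at least `27 |z| ^ 8 |1 - z| ^ 4`, by the parallelogram law and AM-GM, so that
`(M(f) * M(g)) ^ 6 ≥ 27 ^ n |f(0)| ^ 8 |f(1)| ^ 4 ≥ 27 ^ n`, because `f(0)` and `f(1)` are nonzero
integers. At the pole `α = 1 / 2` this degenerates, but there `h(α) = log 2` is already enough.
-/

open scoped Matrix

theorem associated_of_dvd_of_isPrimitive {R : Type*} [CommRing R] [IsDomain R] {p q : R[X]}
    (hpq : p ∣ q) (hq : q.IsPrimitive) (hdeg : q.natDegree ≤ p.natDegree) : Associated p q := by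
  obtain ⟨k, rfl⟩ := hpq
  obtain ⟨hp₀, hk₀⟩ := mul_ne_zero_iff.1 hq.ne_zero
  have hk : k.natDegree = 0 := by
    rw [natDegree_mul hp₀ hk₀] at hdeg
    lia
  obtain ⟨c, rfl⟩ := natDegree_eq_zero.1 hk
  exact associated_mul_unit_right _ _ (isUnit_C.2 (hq c (dvd_mul_left _ _)))

section MoebiusTransform

variable {R : Type*} [CommRing R]

/-- The binary form of degree `n` attached to `p`, precomposed with `γ` and dehomogenized: as a
function of `z` this is `(γ₁₀ z + γ₁₁) ^ n * p ((γ₀₀ z + γ₀₁) / (γ₁₀ z + γ₁₁))`. It is meant for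
`p.natDegree ≤ n`, as `Polynomial.homogenize` drops higher coefficients. -/
noncomputable def moebiusTransform (γ : Matrix (Fin 2) (Fin 2) R) (n : ℕ) (p : R[X]) : R[X] :=
  MvPolynomial.aeval (fun i ↦ C (γ i 0) * X + C (γ i 1)) (p.homogenize n)

theorem moebiusTransform_C_mul (γ : Matrix (Fin 2) (Fin 2) R) (n : ℕ) (c : R) (p : R[X]) :
    moebiusTransform γ n (C c * p) = C c * moebiusTransform γ n p := by
  simp [moebiusTransform]

theorem moebiusTransform_zero_C (γ : Matrix (Fin 2) (Fin 2) R) (c : R) :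
    moebiusTransform γ 0 (C c) = C c := by
  simp [moebiusTransform]

theorem moebiusTransform_X_sub_C (γ : Matrix (Fin 2) (Fin 2) R) (z : R) :
    moebiusTransform γ 1 (X - C z) = C (γ 0 0 - z * γ 1 0) * X + C (γ 0 1 - z * γ 1 1) := by
  simp only [moebiusTransform, homogenize_sub, homogenize_X one_ne_zero, homogenize_C, map_sub,
    map_mul, MvPolynomial.aeval_X, MvPolynomial.algHom_C, tsub_self, pow_zero, mul_one, pow_one,
    algebraMap_eq]
  ring

theorem moebiusTransform_mul (γ : Matrix (Fin 2) (Fin 2) R) {m n : ℕ} {p q : R[X]}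
    (hp : p.natDegree ≤ m) (hq : q.natDegree ≤ n) :
    moebiusTransform γ (m + n) (p * q) = moebiusTransform γ m p * moebiusTransform γ n q := by
  rw [moebiusTransform, homogenize_mul p q hp hq, map_mul, moebiusTransform, moebiusTransform]

theorem homogenize_moebiusTransform (γ : Matrix (Fin 2) (Fin 2) R) (n : ℕ) (p : R[X]) :
    (moebiusTransform γ n p).homogenize n = MvPolynomial.aeval
      (fun i ↦ MvPolynomial.C (γ i 0) * .X 0 + MvPolynomial.C (γ i 1) * .X 1)
      (p.homogenize n) := by
  apply homogenize_eq_of_isHomogeneous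
  · simpa using (isHomogeneous_homogenize (n := n) p).aeval (n := 1) _ fun i ↦
      ((MvPolynomial.isHomogeneous_C_mul_X (γ i 0) 0).add
        (MvPolynomial.isHomogeneous_C_mul_X (γ i 1) 1))
  · rw [MvPolynomial.comp_aeval_apply, moebiusTransform]
    simp

theorem moebiusTransform_moebiusTransform (γ δ : Matrix (Fin 2) (Fin 2) R) (n : ℕ) (p : R[X]) :
    moebiusTransform δ n (moebiusTransform γ n p) = moebiusTransform (γ * δ) n p := by
  rw [moebiusTransform, homogenize_moebiusTransform, MvPolynomial.comp_aeval_apply,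
    moebiusTransform]
  congr 2
  ext1 i
  simp only [map_add, map_mul, MvPolynomial.aeval_X, MvPolynomial.algHom_C, algebraMap_eq,
    Matrix.mul_apply, Fin.sum_univ_two]
  ring

theorem moebiusTransform_one {n : ℕ} {p : R[X]} (hp : p.natDegree ≤ n) :
    moebiusTransform 1 n p = p := by
  rw [moebiusTransform, aeval_homogenize_of_eq_one hp] <;> simp

theorem natDegree_moebiusTransform_le (γ : Matrix (Fin 2) (Fin 2) R) (n : ℕ) (p : R[X]) :
    (moebiusTransform γ n p).natDegree ≤ n := by
  simpa [moebiusTransform] using MvPolynomial.aeval_natDegree_le (n := 1) _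
    (isHomogeneous_homogenize p).totalDegree_le _ fun i ↦ natDegree_linear_le

theorem map_moebiusTransform {S : Type*} [CommRing S] (φ : R →+* S)
    (γ : Matrix (Fin 2) (Fin 2) R) (n : ℕ) (p : R[X]) :
    (moebiusTransform γ n p).map φ = moebiusTransform (γ.map φ) n (p.map φ) := by
  rw [moebiusTransform, moebiusTransform, homogenize_map, MvPolynomial.aeval_def,
    MvPolynomial.aeval_def, MvPolynomial.eval₂_map, ← coe_mapRingHom, MvPolynomial.hom_eval₂]
  congr 1
  · ext; simp
  · ext1; simp

theorem aeval_moebiusTransform {K : Type*} [Field K] [Algebra R K] {γ : Matrix (Fin 2) (Fin 2) R}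
    {n : ℕ} {p : R[X]} (hp : p.natDegree ≤ n) {x y t : K} (ht : t ≠ 0)
    (h : γ.map (algebraMap R K) *ᵥ ![x, 1] = t • ![y, 1]) :
    aeval x (moebiusTransform γ n p) = aeval y p * t ^ n := by
  have hvec : (fun i ↦ aeval x (C (γ i 0) * X + C (γ i 1))) = t • ![y, 1] := by
    rw [← h]
    ext i
    simp [Matrix.mulVec, dotProduct]
  rw [moebiusTransform, MvPolynomial.comp_aeval_apply, hvec,
    ← MvPolynomial.aeval_map_algebraMap K, ← homogenize_map, MvPolynomial.aeval_eq_eval,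
    eval_homogenize (natDegree_map_le.trans hp) _ (by simpa using ht)]
  simp [ht]

theorem moebiusTransform_ne_zero (γ : (Matrix (Fin 2) (Fin 2) R)ˣ) {n : ℕ} {p : R[X]}
    (hp : p.natDegree ≤ n) (hp₀ : p ≠ 0) : moebiusTransform γ.1 n p ≠ 0 := by
  intro h
  apply hp₀
  rw [← moebiusTransform_one hp, ← γ.mul_inv, ← moebiusTransform_moebiusTransform, h]
  simp [moebiusTransform]

theorem isPrimitive_moebiusTransform (γ : (Matrix (Fin 2) (Fin 2) R)ˣ) {p : R[X]}
    (hp : p.IsPrimitive) :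
    (moebiusTransform γ.1 p.natDegree p).IsPrimitive := by
  rintro c ⟨q, hq⟩
  refine hp c ⟨moebiusTransform γ⁻¹.1 p.natDegree q, ?_⟩
  rw [← moebiusTransform_C_mul, ← hq, moebiusTransform_moebiusTransform, γ.mul_inv,
    moebiusTransform_one le_rfl]

theorem moebiusTransform_prod_X_sub_C [Nontrivial R]
    (γ : Matrix (Fin 2) (Fin 2) R) (s : Multiset R) :
    moebiusTransform γ s.card (s.map fun z ↦ X - C z).prod =
      (s.map fun z ↦ C (γ 0 0 - z * γ 1 0) * X + C (γ 0 1 - z * γ 1 1)).prod := by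
  induction s using Multiset.induction with
  | empty => simpa using moebiusTransform_zero_C γ 1
  | cons z s ih =>
    rw [Multiset.map_cons, Multiset.prod_cons, Multiset.card_cons, add_comm,
      moebiusTransform_mul γ (natDegree_X_sub_C_le z)
        (natDegree_multiset_prod_X_sub_C_eq_card s).le,
      moebiusTransform_X_sub_C, ih, Multiset.map_cons, Multiset.prod_cons]

theorem inv_map_mulVec_eq_of_map_mulVec_eq {K : Type*} [Field K] [Algebra R K]
    {γ : (Matrix (Fin 2) (Fin 2) R)ˣ} {v w : Fin 2 → K} {t : K} (ht : t ≠ 0)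
    (h : γ.1.map (algebraMap R K) *ᵥ v = t • w) :
    γ⁻¹.1.map (algebraMap R K) *ᵥ w = t⁻¹ • v := by
  have hinv : γ⁻¹.1.map (algebraMap R K) * γ.1.map (algebraMap R K) = 1 := by
    rw [← Matrix.map_mul, γ.inv_mul, Matrix.map_one _ (map_zero _) (map_one _)]
  rw [eq_inv_smul_iff₀ ht, ← Matrix.mulVec_smul, ← h, Matrix.mulVec_mulVec, hinv,
    Matrix.one_mulVec]

end MoebiusTransform

section ComplexPolynomial

theorem mahlerMeasure_C_mul_X_add_C_eq_max (a b : ℂ) :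
    (C a * X + C b).mahlerMeasure = max ‖a‖ ‖b‖ := by
  rcases eq_or_ne a 0 with rfl | ha
  · simp
  · exact mahlerMeasure_C_mul_X_add_C ha b

theorem mahlerMeasure_moebiusTransform (γ : Matrix (Fin 2) (Fin 2) ℂ) (p : ℂ[X]) :
    (moebiusTransform γ p.natDegree p).mahlerMeasure = ‖p.leadingCoeff‖ *
      (p.roots.map fun z ↦ max ‖γ 0 0 - z * γ 1 0‖ ‖γ 0 1 - z * γ 1 1‖).prod := by
  have hp := IsAlgClosed.splits p
  conv_lhs =>
    enter [1, 3]
    rw [hp.eq_prod_roots]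
  rw [moebiusTransform_C_mul, hp.natDegree_eq_card_roots, moebiusTransform_prod_X_sub_C,
    mahlerMeasure_mul, mahlerMeasure_const, prod_mahlerMeasure_eq_mahlerMeasure_prod,
    Multiset.map_map]
  simp only [Function.comp_def, mahlerMeasure_C_mul_X_add_C_eq_max]

theorem norm_eval_eq_prod_roots (p : ℂ[X]) (x : ℂ) :
    ‖p.eval x‖ = ‖p.leadingCoeff‖ * (p.roots.map fun z ↦ ‖x - z‖).prod := by
  rw [(IsAlgClosed.splits p).eval_eq_prod_roots, norm_mul, ← normHom_apply (Multiset.prod _),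
    map_multiset_prod, Multiset.map_map]
  rfl

end ComplexPolynomial

section IntMinpoly

variable {α : ℂ}

theorem isPrimitive_intMinpoly (α : ℂ) : (intMinpoly α).IsPrimitive :=
  isPrimitive_primPart _

theorem associated_map_intMinpoly (hα : IsIntegral ℚ α) :
    Associated ((intMinpoly α).map (Int.castRingHom ℚ)) (minpoly ℚ α) := by
  obtain ⟨b, hb, hmap⟩ :=
    IsLocalization.integerNormalization_spec (nonZeroDivisors ℤ) (minpoly ℚ α)
  set p := IsLocalization.integerNormalization (nonZeroDivisors ℤ) (minpoly ℚ α) with hp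
  have hb₀ : (b : ℚ) ≠ 0 := Int.cast_ne_zero.2 (nonZeroDivisors.ne_zero hb)
  have hp₀ : p ≠ 0 := by
    rw [hp, Ne, IsFractionRing.integerNormalization_eq_zero_iff]
    exact minpoly.ne_zero hα
  have hc₀ : (p.content : ℚ) ≠ 0 := Int.cast_ne_zero.2 (content_eq_zero_iff.not.2 hp₀)
  have hprim : p.map (Int.castRingHom ℚ) =
      C (p.content : ℚ) * (intMinpoly α).map (Int.castRingHom ℚ) := by
    conv_lhs => rw [p.eq_C_content_mul_primPart]
    simp [intMinpoly, ← hp]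
  have hmin : p.map (Int.castRingHom ℚ) = C (b : ℚ) * minpoly ℚ α := by
    rw [← algebraMap_int_eq, hmap, ← Int.cast_smul_eq_zsmul ℚ, smul_eq_C_mul]
  calc Associated _ (p.map (Int.castRingHom ℚ)) :=
        hprim ▸ associated_unit_mul_right _ _ (isUnit_C.2 hc₀.isUnit)
    Associated _ _ := hmin ▸ associated_unit_mul_left _ _ (isUnit_C.2 hb₀.isUnit)

theorem natDegree_intMinpoly (hα : IsIntegral ℚ α) :
    (intMinpoly α).natDegree = (minpoly ℚ α).natDegree := by
  rw [← natDegree_map_eq_of_injective (RingHom.injective_int (Int.castRingHom ℚ))]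
  exact natDegree_eq_of_degree_eq (degree_eq_degree_of_associated (associated_map_intMinpoly hα))

theorem isIntegral_of_aeval_eq_zero {K : Type*} [Field K] [Algebra ℚ K] {x : K} {p : ℤ[X]}
    (hp : p ≠ 0) (h : aeval x p = 0) : IsIntegral ℚ x :=
  (IsAlgebraic.extendScalars (RingHom.injective_int _) ⟨p, hp, h⟩ : IsAlgebraic ℚ x).isIntegral

theorem intMinpoly_dvd_iff (hα : IsIntegral ℚ α) {p : ℤ[X]} :
    intMinpoly α ∣ p ↔ aeval α p = 0 := by
  rw [IsPrimitive.Int.dvd_iff_map_cast_dvd_map_cast _ _ (isPrimitive_intMinpoly α),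
    (associated_map_intMinpoly hα).dvd_iff_dvd_left, minpoly.dvd_iff, ← algebraMap_int_eq,
    aeval_map_algebraMap]

theorem aeval_intMinpoly (hα : IsIntegral ℚ α) : aeval α (intMinpoly α) = 0 :=
  (intMinpoly_dvd_iff hα).1 dvd_rfl

theorem eval_intMinpoly_ne_zero (hα : IsIntegral ℚ α) {m : ℤ} (hm : α ≠ m) :
    (intMinpoly α).eval m ≠ 0 := by
  intro h
  have hroot : IsRoot ((intMinpoly α).map (Int.castRingHom ℚ)) m := by
    simpa using IsRoot.map (f := Int.castRingHom ℚ) h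
  refine hm ?_
  simpa using (minpoly.root hα (hroot.dvd (associated_map_intMinpoly hα).dvd)).symm

/-- The primitive minimal polynomial of `α` over `ℤ`, regarded as a complex polynomial: its roots
are the conjugates of `α`. -/
noncomputable def complexIntMinpoly (α : ℂ) : ℂ[X] :=
  (intMinpoly α).map (Int.castRingHom ℂ)

theorem natDegree_complexIntMinpoly (α : ℂ) :
    (complexIntMinpoly α).natDegree = (intMinpoly α).natDegree :=
  natDegree_map_eq_of_injective (RingHom.injective_int _) _

theorem natDegree_complexIntMinpoly_pos (hα : IsIntegral ℚ α) :
    0 < (complexIntMinpoly α).natDegree := by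
  rw [natDegree_complexIntMinpoly, natDegree_intMinpoly hα]
  exact minpoly.natDegree_pos hα

theorem mahlerMeasure_eq_mahlerMeasure_map (f : ℤ[X]) :
    _root_.mahlerMeasure f = (f.map (Int.castRingHom ℂ)).mahlerMeasure := by
  rw [_root_.mahlerMeasure, mahlerMeasure_eq_leadingCoeff_mul_prod_roots,
    leadingCoeff_map_of_injective (RingHom.injective_int _)]
  simp [max_comm]

theorem mahlerMeasure_eq_of_associated {p q : ℤ[X]} (h : Associated p q) :
    _root_.mahlerMeasure p = _root_.mahlerMeasure q := by
  obtain ⟨u, rfl⟩ := h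
  obtain ⟨c, hc, hu⟩ := isUnit_iff.1 u.isUnit
  rw [← hu, mahlerMeasure_eq_mahlerMeasure_map, mahlerMeasure_eq_mahlerMeasure_map,
    Polynomial.map_mul, mahlerMeasure_mul, map_C, mahlerMeasure_const]
  obtain rfl | rfl := Int.isUnit_iff.1 hc <;> simp

theorem one_le_mahlerMeasure_intMinpoly (α : ℂ) : 1 ≤ _root_.mahlerMeasure (intMinpoly α) := by
  rw [mahlerMeasure_eq_mahlerMeasure_map]
  exact one_le_mahlerMeasure_of_ne_zero (isPrimitive_intMinpoly α).ne_zero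

theorem height_nonneg (α : ℂ) : 0 ≤ height α :=
  div_nonneg (Real.log_nonneg (one_le_mahlerMeasure_intMinpoly α)) (Nat.cast_nonneg _)

theorem log_den_le_height (q : ℚ) : Real.log q.den ≤ height q := by
  have hq : IsIntegral ℚ (q : ℂ) := isIntegral_algebraMap
  have hdeg : (minpoly ℚ (q : ℂ)).natDegree = 1 := by
    rw [← eq_ratCast (algebraMap ℚ ℂ) q, minpoly.eq_X_sub_C, natDegree_X_sub_C]
  have hroot : aeval q (intMinpoly q) = 0 := by
    have := aeval_intMinpoly hq
    rwa [← eq_ratCast (algebraMap ℚ ℂ) q, aeval_algebraMap_apply, map_eq_zero] at this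
  have hden : (q.den : ℤ) ≤ |(intMinpoly q).leadingCoeff| := by
    refine Int.le_of_dvd (abs_pos.2 (leadingCoeff_ne_zero.2 (isPrimitive_intMinpoly _).ne_zero)) ?_
    exact (dvd_abs _ _).2 (q.associated_num_den.2.dvd_iff_dvd_left.1 (den_dvd_of_is_root hroot))
  rw [height, hdeg, Nat.cast_one, div_one, mahlerMeasure_eq_mahlerMeasure_map]
  refine Real.log_le_log (mod_cast q.den_pos) (le_trans ?_ (leadingCoeff_le_mahlerMeasure _))
  rw [leadingCoeff_map_of_injective (RingHom.injective_int _), eq_intCast, Complex.norm_intCast]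
  exact_mod_cast hden

end IntMinpoly

section UnimodularMoebius

variable {α β t : ℂ} {γ : (Matrix (Fin 2) (Fin 2) ℤ)ˣ}

theorem aeval_moebiusTransform_intMinpoly (hα : IsIntegral ℚ α) (ht : t ≠ 0)
    (h : γ.1.map (algebraMap ℤ ℂ) *ᵥ ![β, 1] = t • ![α, 1]) :
    aeval β (moebiusTransform γ.1 (intMinpoly α).natDegree (intMinpoly α)) = 0 := by
  rw [aeval_moebiusTransform le_rfl ht h, aeval_intMinpoly hα, zero_mul]

theorem isIntegral_of_mulVec (hα : IsIntegral ℚ α) (ht : t ≠ 0)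
    (h : γ.1.map (algebraMap ℤ ℂ) *ᵥ ![β, 1] = t • ![α, 1]) : IsIntegral ℚ β :=
  isIntegral_of_aeval_eq_zero
    (moebiusTransform_ne_zero γ le_rfl (isPrimitive_intMinpoly α).ne_zero)
    (aeval_moebiusTransform_intMinpoly hα ht h)

theorem intMinpoly_dvd_moebiusTransform (hα : IsIntegral ℚ α) (ht : t ≠ 0)
    (h : γ.1.map (algebraMap ℤ ℂ) *ᵥ ![β, 1] = t • ![α, 1]) :
    intMinpoly β ∣ moebiusTransform γ.1 (intMinpoly α).natDegree (intMinpoly α) :=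
  (intMinpoly_dvd_iff (isIntegral_of_mulVec hα ht h)).2 (aeval_moebiusTransform_intMinpoly hα ht h)

theorem natDegree_intMinpoly_le_of_mulVec (hα : IsIntegral ℚ α) (ht : t ≠ 0)
    (h : γ.1.map (algebraMap ℤ ℂ) *ᵥ ![β, 1] = t • ![α, 1]) :
    (intMinpoly β).natDegree ≤ (intMinpoly α).natDegree :=
  (natDegree_le_of_dvd (intMinpoly_dvd_moebiusTransform hα ht h)
    (moebiusTransform_ne_zero γ le_rfl (isPrimitive_intMinpoly α).ne_zero)).trans
    (natDegree_moebiusTransform_le _ _ _)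

theorem natDegree_intMinpoly_eq_of_mulVec (hα : IsIntegral ℚ α) (ht : t ≠ 0)
    (h : γ.1.map (algebraMap ℤ ℂ) *ᵥ ![β, 1] = t • ![α, 1]) :
    (intMinpoly β).natDegree = (intMinpoly α).natDegree :=
  (natDegree_intMinpoly_le_of_mulVec hα ht h).antisymm <|
    natDegree_intMinpoly_le_of_mulVec (isIntegral_of_mulVec hα ht h) (inv_ne_zero ht)
      (inv_map_mulVec_eq_of_map_mulVec_eq ht h)

theorem associated_intMinpoly_moebiusTransform (hα : IsIntegral ℚ α) (ht : t ≠ 0)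
    (h : γ.1.map (algebraMap ℤ ℂ) *ᵥ ![β, 1] = t • ![α, 1]) :
    Associated (intMinpoly β)
      (moebiusTransform γ.1 (intMinpoly α).natDegree (intMinpoly α)) :=
  associated_of_dvd_of_isPrimitive (intMinpoly_dvd_moebiusTransform hα ht h)
    (isPrimitive_moebiusTransform γ (isPrimitive_intMinpoly α))
    ((natDegree_moebiusTransform_le _ _ _).trans (natDegree_intMinpoly_eq_of_mulVec hα ht h).ge)

theorem mahlerMeasure_intMinpoly_of_mulVec (hα : IsIntegral ℚ α) (ht : t ≠ 0)
    (h : γ.1.map (algebraMap ℤ ℂ) *ᵥ ![β, 1] = t • ![α, 1]) :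
    _root_.mahlerMeasure (intMinpoly β) = (moebiusTransform (γ.1.map (Int.castRingHom ℂ))
      (complexIntMinpoly α).natDegree (complexIntMinpoly α)).mahlerMeasure := by
  rw [mahlerMeasure_eq_of_associated (associated_intMinpoly_moebiusTransform hα ht h),
    mahlerMeasure_eq_mahlerMeasure_map, map_moebiusTransform, natDegree_complexIntMinpoly,
    complexIntMinpoly]

end UnimodularMoebius

section Involution

/-- The involution `z ↦ z / (2 * z - 1)`, as an invertible integer matrix. -/
def sigma : (Matrix (Fin 2) (Fin 2) ℤ)ˣ :=
  ⟨!![1, 0; 2, -1], !![1, 0; 2, -1], by decide, by decide⟩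

/-- The contribution of a conjugate `z` of `α` to the product of the Mahler measures of `α` and
`sigma α`. -/
noncomputable def sigmaFactor (z : ℂ) : ℝ :=
  max ‖z‖ 1 * max ‖z‖ ‖2 * z - 1‖

theorem map_sigma {R : Type*} [CommRing R] (φ : ℤ →+* R) : sigma.1.map φ = !![1, 0; 2, -1] := by
  ext i j
  fin_cases i <;> fin_cases j <;> simp [sigma]

theorem sigma_mulVec {K : Type*} [Field K] {x : K} (hx : 2 * x - 1 ≠ 0) :
    sigma.1.map (algebraMap ℤ K) *ᵥ ![x / (2 * x - 1), 1] = (2 * x - 1)⁻¹ • ![x, 1] := by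
  have hcoord : 2 * (x / (2 * x - 1)) - 1 = (2 * x - 1)⁻¹ := by
    field_simp
    ring
  rw [map_sigma]
  ext i
  fin_cases i
  · simp [div_eq_inv_mul]
  · simpa [sub_eq_add_neg, mul_comm] using hcoord

theorem mahlerMeasure_mul_mahlerMeasure_sigma (p : ℂ[X]) :
    p.mahlerMeasure *
        (moebiusTransform (sigma.1.map (Int.castRingHom ℂ)) p.natDegree p).mahlerMeasure =
      ‖p.leadingCoeff‖ ^ 2 * (p.roots.map sigmaFactor).prod := by
  have hfactor (z : ℂ) :
      max ‖z‖ 1 * max ‖1 - z * 2‖ ‖0 - z * (-1)‖ = sigmaFactor z := by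
    rw [sigmaFactor, max_comm ‖1 - z * 2‖, norm_sub_rev 1, mul_comm z 2, mul_neg_one, zero_sub,
      neg_neg]
  simp_rw [← hfactor, max_comm _ (1 : ℝ)]
  rw [Multiset.prod_map_mul, mahlerMeasure_eq_leadingCoeff_mul_prod_roots, map_sigma,
    mahlerMeasure_moebiusTransform]
  simp only [Matrix.of_apply, Matrix.cons_val]
  ring

theorem height_add_height_sigma {α : ℂ} (hα : IsIntegral ℚ α) (hα' : 2 * α - 1 ≠ 0) :
    height α + height (α / (2 * α - 1)) = Real.log (‖(complexIntMinpoly α).leadingCoeff‖ ^ 2 *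
      ((complexIntMinpoly α).roots.map sigmaFactor).prod) / (complexIntMinpoly α).natDegree := by
  have ht := inv_ne_zero hα'
  have hσ := sigma_mulVec hα'
  have hβ := isIntegral_of_mulVec hα ht hσ
  have hM₀ (β : ℂ) : _root_.mahlerMeasure (intMinpoly β) ≠ 0 :=
    (zero_lt_one.trans_le (one_le_mahlerMeasure_intMinpoly β)).ne'
  rw [height, height, ← natDegree_intMinpoly hα, ← natDegree_intMinpoly hβ,
    natDegree_intMinpoly_eq_of_mulVec hα ht hσ, ← add_div, ← Real.log_mul (hM₀ _) (hM₀ _),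
    mahlerMeasure_intMinpoly_of_mulVec hα ht hσ, mahlerMeasure_eq_mahlerMeasure_map,
    ← complexIntMinpoly, mahlerMeasure_mul_mahlerMeasure_sigma, natDegree_complexIntMinpoly]

end Involution

section LowerBound

theorem mul_mul_sq_le_add_two_mul_pow_three {x y : ℝ} (hx : 0 ≤ x) (hy : 0 ≤ y) :
    27 * x * y ^ 2 ≤ (x + 2 * y) ^ 3 := by
  have hnonneg : 0 ≤ (x + 8 * y) * (x - y) ^ 2 := by positivity
  linear_combination hnonneg

theorem mul_pow_four_mul_sq_le_max_mul_max_pow_three {a b : ℝ} (ha : 0 ≤ a) (hb : 0 ≤ b) :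
    27 * a ^ 4 * b ^ 2 ≤ (max a 1 * max a (2 * a + 2 * b - 1)) ^ 3 := by
  set m := max a 1
  set d := max a (2 * a + 2 * b - 1)
  have ham : a ≤ m := le_max_left _ _
  have h1m : 1 ≤ m := le_max_right _ _
  have had : a ≤ d := le_max_left _ _
  have hbd : 2 * a + 2 * b - 1 ≤ d := le_max_right _ _
  have hmd : a ^ 2 + 2 * (a * b) ≤ m * d := by
    rcases le_total a 1 with ha1 | ha1
    · calc a ^ 2 + 2 * (a * b) = (1 - a) * a + a * (2 * a + 2 * b - 1) := by ring
        _ ≤ (1 - a) * d + a * d := by gcongr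
        _ = 1 * d := by ring
        _ ≤ m * d := by gcongr
    · calc a ^ 2 + 2 * (a * b) = a * (a + 2 * b) := by ring
        _ ≤ m * d := by gcongr; linarith
  calc 27 * a ^ 4 * b ^ 2 = 27 * a ^ 2 * (a * b) ^ 2 := by ring
    _ ≤ (a ^ 2 + 2 * (a * b)) ^ 3 := mul_mul_sq_le_add_two_mul_pow_three
        (by positivity) (by positivity)
    _ ≤ (m * d) ^ 3 := by gcongr

-- Equality holds at `z = exp (± π i / 3)`, the conjugates of the extremal `α`.
theorem norm_pow_mul_norm_pow_le_sigmaFactor_pow (z : ℂ) :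
    27 * ‖z‖ ^ 8 * ‖1 - z‖ ^ 4 ≤ sigmaFactor z ^ 6 := by
  have hlaw : ‖2 * z - 1‖ ^ 2 = 2 * ‖z‖ ^ 2 + 2 * ‖1 - z‖ ^ 2 - 1 := by
    have := parallelogram_law_with_norm ℝ z (1 - z)
    rw [add_sub_cancel, norm_one, show z - (1 - z) = 2 * z - 1 by ring] at this
    linarith
  have hmax {x : ℝ} (hx : 0 ≤ x) : max (‖z‖ ^ 2) (x ^ 2) = max ‖z‖ x ^ 2 :=
    (pow_left_monotoneOn.map_max (norm_nonneg z) hx).symm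
  have hmax_one : max (‖z‖ ^ 2) 1 = max ‖z‖ 1 ^ 2 := by simpa using hmax zero_le_one
  have h := mul_pow_four_mul_sq_le_max_mul_max_pow_three (sq_nonneg ‖z‖) (sq_nonneg ‖1 - z‖)
  rw [← hlaw, hmax (norm_nonneg _), hmax_one] at h
  calc 27 * ‖z‖ ^ 8 * ‖1 - z‖ ^ 4 = 27 * (‖z‖ ^ 2) ^ 4 * (‖1 - z‖ ^ 2) ^ 2 := by ring
    _ ≤ _ := h
    _ = sigmaFactor z ^ 6 := by rw [sigmaFactor]; ring

theorem norm_eval_pow_le_prod_sigmaFactor (p : ℂ[X]) :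
    27 ^ p.natDegree * ‖p.eval 0‖ ^ 8 * ‖p.eval 1‖ ^ 4 ≤
      (‖p.leadingCoeff‖ ^ 2 * (p.roots.map sigmaFactor).prod) ^ 6 := by
  have hprod : (p.roots.map fun z ↦ 27 * ‖z‖ ^ 8 * ‖1 - z‖ ^ 4).prod ≤
      (p.roots.map fun z ↦ sigmaFactor z ^ 6).prod :=
    Multiset.prod_map_le_prod_map₀ _ _ (fun z _ ↦ by positivity)
      fun z _ ↦ norm_pow_mul_norm_pow_le_sigmaFactor_pow z
  simp only [Multiset.prod_map_mul, Multiset.prod_map_pow, Multiset.map_const',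
    Multiset.prod_replicate, ← (IsAlgClosed.splits p).natDegree_eq_card_roots] at hprod
  simp only [norm_eval_eq_prod_roots, zero_sub, norm_neg]
  calc _ = ‖p.leadingCoeff‖ ^ 12 * (27 ^ p.natDegree * (p.roots.map fun z ↦ ‖z‖).prod ^ 8 *
        (p.roots.map fun z ↦ ‖1 - z‖).prod ^ 4) := by ring
    _ ≤ ‖p.leadingCoeff‖ ^ 12 * (p.roots.map sigmaFactor).prod ^ 6 := by gcongr
    _ = _ := by ring

theorem half_log_three_le_height_add_height_sigma {α : ℂ} (hα : IsIntegral ℚ α) (h₀ : α ≠ 0)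
    (h₁ : α ≠ 1) (hα' : 2 * α - 1 ≠ 0) :
    1 / 2 * Real.log 3 ≤ height α + height (α / (2 * α - 1)) := by
  set p := complexIntMinpoly α with hp
  have hdeg : 0 < p.natDegree := natDegree_complexIntMinpoly_pos hα
  have heval (m : ℤ) (hm : α ≠ m) : 1 ≤ ‖p.eval (m : ℂ)‖ := by
    rw [hp, complexIntMinpoly, eval_intCast_map, eq_intCast, Complex.norm_intCast]
    exact_mod_cast Int.one_le_abs (eval_intMinpoly_ne_zero hα hm)
  have hpow : (27 : ℝ) ^ p.natDegree ≤
      (‖p.leadingCoeff‖ ^ 2 * (p.roots.map sigmaFactor).prod) ^ 6 := by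
    refine le_trans ?_ (norm_eval_pow_le_prod_sigmaFactor p)
    have hp₀ := one_le_pow₀ (n := 8) (heval 0 (mod_cast h₀))
    have hp₁ := one_le_pow₀ (n := 4) (heval 1 (mod_cast h₁))
    rw [Int.cast_zero] at hp₀
    rw [Int.cast_one] at hp₁
    rw [mul_assoc]
    exact le_mul_of_one_le_right (by positivity) (one_le_mul_of_one_le_of_one_le hp₀ hp₁)
  have hlog := Real.log_le_log (by positivity) hpow
  rw [Real.log_pow, Real.log_pow, show (27 : ℝ) = 3 ^ 3 by norm_num, Real.log_pow] at hlog
  rw [height_add_height_sigma hα hα', le_div_iff₀ (mod_cast hdeg)]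
  push_cast at hlog
  linarith

theorem half_log_three_le_height_one_half_add (β : ℂ) :
    1 / 2 * Real.log 3 ≤ height (1 / 2) + height β := by
  have hlog : Real.log 2 ≤ height (1 / 2) := by
    simpa using log_den_le_height (1 / 2)
  have h3 : Real.log 3 ≤ 2 * Real.log 2 := by
    rw [← Real.log_rpow two_pos]
    exact Real.log_le_log three_pos (by norm_num)
  linarith [height_nonneg β]

end LowerBound

section Equality

theorem sigmaFactor_eq_sqrt_three {z : ℂ} (hz : z ^ 2 - z + 1 = 0) :
    sigmaFactor z = √3 := by
  have hnorm : ‖z‖ = 1 := by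
    refine Complex.norm_eq_one_of_pow_eq_one (n := 6) ?_ (by norm_num)
    linear_combination (z ^ 4 + z ^ 3 - z - 1) * hz
  have hsq : ‖2 * z - 1‖ ^ 2 = 3 := by
    rw [← norm_pow, show (2 * z - 1) ^ 2 = -3 by linear_combination 4 * hz]
    norm_num
  have hsqrt : ‖2 * z - 1‖ = √3 := by
    rw [← hsq, Real.sqrt_sq (norm_nonneg _)]
  rw [sigmaFactor, hnorm, hsqrt, max_self, one_mul, max_eq_right]
  exact Real.one_le_sqrt.2 (by norm_num)

theorem height_add_height_sigma_eq_half_log_three {α : ℂ} (h : α ^ 2 - α + 1 = 0) :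
    height α + height (α / (2 * α - 1)) = 1 / 2 * Real.log 3 := by
  have hmonic : (X ^ 2 - X + 1 : ℤ[X]).Monic := by monicity!
  have haeval : aeval α (X ^ 2 - X + 1 : ℤ[X]) = 0 := by simpa using h
  have hα := isIntegral_of_aeval_eq_zero hmonic.ne_zero haeval
  have hdvd := (intMinpoly_dvd_iff hα).2 haeval
  have hα' : 2 * α - 1 ≠ 0 := by
    intro h0
    have : (3 : ℂ) = 0 := by linear_combination 4 * h - (2 * α - 1) * h0
    norm_num at this
  set p := complexIntMinpoly α with hp
  have hlead : ‖p.leadingCoeff‖ = 1 := by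
    rw [hp, complexIntMinpoly, leadingCoeff_map_of_injective (RingHom.injective_int _), eq_intCast,
      Complex.norm_intCast]
    exact_mod_cast Int.isUnit_iff_abs_eq.1 (hmonic.isUnit_leadingCoeff_of_dvd hdvd)
  have hroots : ∀ z ∈ p.roots, sigmaFactor z = √3 := by
    intro z hz
    apply sigmaFactor_eq_sqrt_three
    have := (isRoot_of_mem_roots hz).dvd (Polynomial.map_dvd (Int.castRingHom ℂ) hdvd)
    simpa using this
  have hdeg : (p.natDegree : ℝ) ≠ 0 := mod_cast (natDegree_complexIntMinpoly_pos hα).ne'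
  rw [height_add_height_sigma hα hα', hlead, Multiset.map_congr rfl hroots, Multiset.map_const',
    Multiset.prod_replicate, ← (IsAlgClosed.splits p).natDegree_eq_card_roots, one_pow, one_mul,
    Real.log_pow, mul_div_cancel_left₀ _ hdeg, Real.log_sqrt three_pos.le]
  ring

end Equality

/-- Row 2 of Table 2: for the involution `σ(z) = z/(2z - 1)`, every algebraic
`α ∉ {0, 1}` satisfies `h(α) + h(α/(2α - 1)) ≥ (1/2)·log 3`, with equality at
`α = (1 + i√3)/2`. -/
theorem table2_row2 :
    (∀ α : ℂ, IsAlgebraic ℚ α → α ≠ 0 → α ≠ 1 →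
      height α + height (α / (2 * α - 1)) ≥ (1 / 2) * Real.log 3) ∧
    height ((1 + Real.sqrt 3 * Complex.I) / 2) +
        height (((1 + Real.sqrt 3 * Complex.I) / 2) /
          (2 * ((1 + Real.sqrt 3 * Complex.I) / 2) - 1))
      = (1 / 2) * Real.log 3 := by
  refine ⟨fun α hα h₀ h₁ ↦ ?_, height_add_height_sigma_eq_half_log_three ?_⟩
  · rcases eq_or_ne (2 * α - 1) 0 with h | h
    · -- At the pole of the involution, `α / (2 * α - 1)` is the junk value `0` instead of `∞`.
      obtain rfl : α = 1 / 2 := by linear_combination h / 2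
      exact half_log_three_le_height_one_half_add _
    · exact half_log_three_le_height_add_height_sigma hα.isIntegral h₀ h₁ h
  · have h3 : (√3 : ℂ) ^ 2 = 3 := mod_cast Real.sq_sqrt zero_le_three
    linear_combination (h3 * Complex.I ^ 2 + 3 * Complex.I_sq) / 4
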